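/- arXiv:2305.04305 — 2 statements merged into one kernel-verified Lean document; each statement's English description precedes it below -/
import Mathlib

section
/- In the online Ramsey game with targets red C₄ and blue P₆, consider the position in which the five edges v₁v₂, v₂v₃, v₃v₄, v₄v₅, v₅v₆ of a path on six distinct vertices have been colored red, blue, blue, blue, red respectively (case B5). From this position Builder can force a red copy of C₄ or a blue copy of P₆ within at most 6 additional rounds, so within at most 11 rounds in total. -/
open SimpleGraph

/-- The set `S` of edges of the infinite complete graph on `ℕ` contains a copy of
the graph `G`: there is an injective map of the vertices of `G` into `ℕ` sending
every edge of `G` into `S`. -/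
def HasCopy {V : Type*} (G : SimpleGraph V) (S : Set (Sym2 ℕ)) : Prop :=
  ∃ f : V → ℕ, Function.Injective f ∧ ∀ a b, G.Adj a b → s(f a, f b) ∈ S

/-- `BuilderWinsIn G H R B r` means: in the online Ramsey game with targets a red copy
of `G` and a blue copy of `H`, from the position in which the edges in `R` have been
colored red and the edges in `B` have been colored blue, Builder has a strategy that
guarantees, against every Painter strategy, that within at most `r` further rounds the
colored edges contain a red copy of `G` or a blue copy of `H`.  (In each round Builder
chooses a previously unchosen non-loop edge of the infinite complete graph on `ℕ`, and
Painter immediately colors it red or blue; so Builder wins within `r + 1` rounds iff he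
has already won, or he can choose an edge such that whichever color Painter gives it,
he can win within `r` further rounds.) -/
def BuilderWinsIn {V W : Type*} (G : SimpleGraph V) (H : SimpleGraph W) :
    Set (Sym2 ℕ) → Set (Sym2 ℕ) → ℕ → Prop
  | R, B, 0 => HasCopy G R ∨ HasCopy H B
  | R, B, (r + 1) => HasCopy G R ∨ HasCopy H B ∨
      ∃ e : Sym2 ℕ, ¬ e.IsDiag ∧ e ∉ R ∧ e ∉ B ∧
        BuilderWinsIn G H (insert e R) B r ∧ BuilderWinsIn G H R (insert e B) r

/-- The online size Ramsey number `ř(G, H)`: the least `t` such that, starting from the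
empty position, Builder can force a red copy of `G` or a blue copy of `H` within at
most `t` rounds. -/
noncomputable def onlineRamsey {V W : Type*} (G : SimpleGraph V) (H : SimpleGraph W) : ℕ :=
  sInf {t | BuilderWinsIn G H ∅ ∅ t}

/-- A strategy tree for Builder on the vertex set `Fin 7`. -/
inductive Strat where
  | red (a b c d : Fin 7) : Strat
  | blue (a b c d e f : Fin 7) : Strat
  | move (a b : Fin 7) (l r : Strat) : Strat

/-- The tree `t` wins from the position `(R, B)` within the given number of rounds. -/
def Strat.check : Strat → List (Sym2 (Fin 7)) → List (Sym2 (Fin 7)) → ℕ → Bool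
  | .red a b c d, R, _, _ =>
      decide ([a, b, c, d].Nodup) && decide (s(a, b) ∈ R) && decide (s(b, c) ∈ R)
        && decide (s(c, d) ∈ R) && decide (s(d, a) ∈ R)
  | .blue a b c d e f, _, B, _ =>
      decide ([a, b, c, d, e, f].Nodup) && decide (s(a, b) ∈ B) && decide (s(b, c) ∈ B)
        && decide (s(c, d) ∈ B) && decide (s(d, e) ∈ B) && decide (s(e, f) ∈ B)
  | .move _ _ _ _, _, _, 0 => false
  | .move a b l r, R, B, n + 1 =>
      decide (a ≠ b) && decide (s(a, b) ∉ R) && decide (s(a, b) ∉ B)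
        && l.check (s(a, b) :: R) B n && r.check R (s(a, b) :: B) n

/-- The set of edges on `ℕ` coded by a list of edges on `Fin 7`. -/
def img (w : Fin 7 → ℕ) (L : List (Sym2 (Fin 7))) : Set (Sym2 ℕ) :=
  {e | ∃ x ∈ L, Sym2.map w x = e}

lemma mem_img {w : Fin 7 → ℕ} {L : List (Sym2 (Fin 7))} {a b : Fin 7} (h : s(a, b) ∈ L) :
    s(w a, w b) ∈ img w L := ⟨_, h, rfl⟩

lemma not_mem_img {w : Fin 7 → ℕ} (hw : Function.Injective w) {L : List (Sym2 (Fin 7))}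
    {a b : Fin 7} (h : s(a, b) ∉ L) : s(w a, w b) ∉ img w L := by
  rintro ⟨x, hx, hxe⟩
  have : x = s(a, b) := Sym2.map.injective hw hxe
  exact h (this ▸ hx)

lemma img_cons (w : Fin 7 → ℕ) (L : List (Sym2 (Fin 7))) (a b : Fin 7) :
    img w (s(a, b) :: L) = insert s(w a, w b) (img w L) := by
  ext e
  simp [img, eq_comm]

lemma wins_of_copy {V W : Type*} {G : SimpleGraph V} {H : SimpleGraph W}
    {R B : Set (Sym2 ℕ)} (n : ℕ) (h : HasCopy G R ∨ HasCopy H B) :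
    BuilderWinsIn G H R B n := by
  cases n with
  | zero => exact h
  | succ n =>
    rcases h with h | h
    · exact Or.inl h
    · exact Or.inr (Or.inl h)

lemma inj_of_nodup {n : ℕ} {g : Fin n → Fin 7} (h : (List.ofFn g).Nodup) :
    Function.Injective g := List.nodup_ofFn.1 h

lemma copy_cycle {w : Fin 7 → ℕ} (hw : Function.Injective w) {R : List (Sym2 (Fin 7))}
    {a b c d : Fin 7} (hn : [a, b, c, d].Nodup) (h1 : s(a, b) ∈ R) (h2 : s(b, c) ∈ R)
    (h3 : s(c, d) ∈ R) (h4 : s(d, a) ∈ R) : HasCopy (cycleGraph 4) (img w R) := by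
  have e1 := mem_img (w := w) h1
  have e2 := mem_img (w := w) h2
  have e3 := mem_img (w := w) h3
  have e4 := mem_img (w := w) h4
  have hi : Function.Injective ![a, b, c, d] := inj_of_nodup (by simpa [List.ofFn_succ] using hn)
  refine ⟨w ∘ ![a, b, c, d], hw.comp hi, ?_⟩
  intro x y hxy
  rw [cycleGraph_adj] at hxy
  have key : (x, y) ∈ ([(0, 1), (1, 2), (2, 3), (3, 0), (1, 0), (2, 1), (3, 2), (0, 3)] :
      List (Fin 4 × Fin 4)) := by
    revert x y
    decide
  simp only [List.mem_cons, Prod.mk.injEq, List.not_mem_nil, or_false] at key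
  rcases key with ⟨rfl, rfl⟩ | ⟨rfl, rfl⟩ | ⟨rfl, rfl⟩ | ⟨rfl, rfl⟩ | ⟨rfl, rfl⟩ | ⟨rfl, rfl⟩ |
    ⟨rfl, rfl⟩ | ⟨rfl, rfl⟩
  · exact e1
  · exact e2
  · exact e3
  · exact e4
  · rw [Sym2.eq_swap]; exact e1
  · rw [Sym2.eq_swap]; exact e2
  · rw [Sym2.eq_swap]; exact e3
  · rw [Sym2.eq_swap]; exact e4

lemma copy_path {w : Fin 7 → ℕ} (hw : Function.Injective w) {B : List (Sym2 (Fin 7))}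
    {a b c d e f : Fin 7} (hn : [a, b, c, d, e, f].Nodup) (h1 : s(a, b) ∈ B) (h2 : s(b, c) ∈ B)
    (h3 : s(c, d) ∈ B) (h4 : s(d, e) ∈ B) (h5 : s(e, f) ∈ B) :
    HasCopy (pathGraph 6) (img w B) := by
  have e1 := mem_img (w := w) h1
  have e2 := mem_img (w := w) h2
  have e3 := mem_img (w := w) h3
  have e4 := mem_img (w := w) h4
  have e5 := mem_img (w := w) h5
  have hi : Function.Injective ![a, b, c, d, e, f] :=
    inj_of_nodup (by simpa [List.ofFn_succ] using hn)
  refine ⟨w ∘ ![a, b, c, d, e, f], hw.comp hi, ?_⟩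
  intro x y hxy
  rw [pathGraph_adj] at hxy
  have key : (x, y) ∈ ([(0, 1), (1, 2), (2, 3), (3, 4), (4, 5), (1, 0), (2, 1), (3, 2), (4, 3),
      (5, 4)] : List (Fin 6 × Fin 6)) := by
    revert x y
    decide
  simp only [List.mem_cons, Prod.mk.injEq, List.not_mem_nil, or_false] at key
  rcases key with ⟨rfl, rfl⟩ | ⟨rfl, rfl⟩ | ⟨rfl, rfl⟩ | ⟨rfl, rfl⟩ | ⟨rfl, rfl⟩ | ⟨rfl, rfl⟩ |
    ⟨rfl, rfl⟩ | ⟨rfl, rfl⟩ | ⟨rfl, rfl⟩ | ⟨rfl, rfl⟩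
  · exact e1
  · exact e2
  · exact e3
  · exact e4
  · exact e5
  · rw [Sym2.eq_swap]; exact e1
  · rw [Sym2.eq_swap]; exact e2
  · rw [Sym2.eq_swap]; exact e3
  · rw [Sym2.eq_swap]; exact e4
  · rw [Sym2.eq_swap]; exact e5

theorem Strat.sound {w : Fin 7 → ℕ} (hw : Function.Injective w) (t : Strat) :
    ∀ (R B : List (Sym2 (Fin 7))) (n : ℕ), t.check R B n = true →
      BuilderWinsIn (cycleGraph 4) (pathGraph 6) (img w R) (img w B) n := by
  induction t with
  | red a b c d =>
    intro R B n h
    simp only [Strat.check, Bool.and_eq_true, decide_eq_true_eq] at h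
    obtain ⟨⟨⟨⟨h0, h1⟩, h2⟩, h3⟩, h4⟩ := h
    exact wins_of_copy n (Or.inl (copy_cycle hw h0 h1 h2 h3 h4))
  | blue a b c d e f =>
    intro R B n h
    simp only [Strat.check, Bool.and_eq_true, decide_eq_true_eq] at h
    obtain ⟨⟨⟨⟨⟨h0, h1⟩, h2⟩, h3⟩, h4⟩, h5⟩ := h
    exact wins_of_copy n (Or.inr (copy_path hw h0 h1 h2 h3 h4 h5))
  | move a b l r ihl ihr =>
    intro R B n h
    cases n with
    | zero => simp [Strat.check] at h
    | succ n =>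
      simp only [Strat.check, Bool.and_eq_true, decide_eq_true_eq] at h
      obtain ⟨⟨⟨⟨h0, h1⟩, h2⟩, h3⟩, h4⟩ := h
      refine Or.inr (Or.inr ⟨s(w a, w b), ?_, not_mem_img hw h1, not_mem_img hw h2, ?_, ?_⟩)
      · rw [Sym2.mk_isDiag_iff]
        exact fun h => h0 (hw h)
      · rw [← img_cons]
        exact ihl _ _ _ h3
      · rw [← img_cons]
        exact ihr _ _ _ h4

/-- Builder's winning strategy; vertex `6` is a fresh vertex. -/
def winningTree : Strat :=
  (.move 0 2
   (.move 0 4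
    (.move 0 6
     (.move 1 5
      (.red 0 1 5 4)
      (.move 5 6
       (.red 0 4 5 6)
       (.blue 4 3 2 1 5 6)))
     (.move 1 6
      (.move 4 6
       (.red 0 1 6 4)
       (.blue 0 6 4 3 2 1))
      (.blue 0 6 1 2 3 4)))
    (.move 1 5
     (.move 5 6
      (.move 0 6
       (.red 0 1 5 6)
       (.blue 1 2 3 4 0 6))
      (.move 2 5
       (.red 0 1 5 2)
       (.blue 0 4 3 2 5 6)))
     (.blue 0 4 3 2 1 5)))
   (.move 0 3
    (.move 0 4
     (.move 1 5
      (.red 0 1 5 4)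
      (.move 3 5
       (.red 0 3 5 4)
       (.blue 0 2 1 5 3 4)))
     (.move 1 5
      (.move 3 5
       (.red 0 1 5 3)
       (.blue 1 2 0 4 3 5))
      (.blue 0 4 3 2 1 5)))
    (.move 0 5
     (.move 0 6
      (.move 4 6
       (.red 0 5 4 6)
       (.blue 1 2 0 3 4 6))
      (.move 1 4
       (.red 0 1 4 5)
       (.blue 1 4 3 2 0 6)))
     (.move 0 4
      (.move 1 5
       (.red 0 1 5 4)
       (.blue 0 5 1 2 3 4))
      (.blue 1 2 3 4 0 5)))))

lemma winningTree_check :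
    winningTree.check [s(0, 1), s(4, 5)] [s(1, 2), s(2, 3), s(3, 4)] 6 = true := by
  decide

/-- Case `B5`: in the online Ramsey game with targets red `C₄` and blue `P₆`,
from the position in which the five edges `v₁v₂, v₂v₃, v₃v₄, v₄v₅, v₅v₆` of a path on
six distinct vertices have been colored red, blue, blue, blue, red respectively,
Builder can force a red copy of `C₄` or a blue copy of `P₆` within at most 6 additional
rounds (so within at most 11 rounds in total). -/
theorem builder_wins_case_B5 (v : Fin 6 → ℕ) (hv : Function.Injective v) :
    BuilderWinsIn (cycleGraph 4) (pathGraph 6)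
      {s(v 0, v 1), s(v 4, v 5)}
      {s(v 1, v 2), s(v 2, v 3), s(v 3, v 4)} 6 := by
  obtain ⟨x, hx⟩ : ∃ x, x ∉ Set.range v := (Set.finite_range v).exists_notMem
  have hw : Function.Injective (Fin.snoc v x : Fin 7 → ℕ) :=
    Fin.snoc_injective_iff.2 ⟨hv, hx⟩
  have h := Strat.sound hw winningTree _ _ _ winningTree_check
  have e0 : (Fin.snoc v x : Fin 7 → ℕ) 0 = v 0 := rfl
  have e1 : (Fin.snoc v x : Fin 7 → ℕ) 1 = v 1 := rfl
  have e2 : (Fin.snoc v x : Fin 7 → ℕ) 2 = v 2 := rfl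
  have e3 : (Fin.snoc v x : Fin 7 → ℕ) 3 = v 3 := rfl
  have e4 : (Fin.snoc v x : Fin 7 → ℕ) 4 = v 4 := rfl
  have e5 : (Fin.snoc v x : Fin 7 → ℕ) 5 = v 5 := rfl
  have hnil : img (Fin.snoc v x : Fin 7 → ℕ) [] = ∅ := by
    ext e
    simp [img]
  simp only [img_cons, hnil, e0, e1, e2, e3, e4, e5, insert_empty_eq] at h
  exact h
end

section
/- In the online Ramsey game with targets red C₄ and blue P₆, consider the position in which the five edges v₁v₂, v₂v₃, v₃v₄, v₄v₅, v₅v₆ of a path on six distinct vertices have been colored blue, red, red, blue, blue respectively (case B8). From this position Builder can force a red copy of C₄ or a blue copy of P₆ within at most 6 additional rounds, so within at most 11 rounds in total. -/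
open SimpleGraph

/-- A Builder strategy tree on seven labelled vertices.  A leaf names a red four-cycle or a
blue six-vertex path; a node names the edge to play, then the answer to red and to blue. -/
inductive StratTree where
  | red (f : Fin 4 → Fin 7)
  | blue (f : Fin 6 → Fin 7)
  | node (a b : Fin 7) (r b' : StratTree)

/-- The strategy tree wins from the position `R`, `B` within `n` rounds. -/
def StratTree.Ok : StratTree → List (Sym2 (Fin 7)) → List (Sym2 (Fin 7)) → ℕ → Prop
  | .red f, R, _, _ => Function.Injective f ∧ ∀ i : Fin 4, s(f i, f (i + 1)) ∈ R
  | .blue f, _, B, _ => Function.Injective f ∧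
      ∀ i : Fin 5, s(f i.castSucc, f i.succ) ∈ B
  | .node _ _ _ _, _, _, 0 => False
  | .node a b r b', R, B, n + 1 => a ≠ b ∧ s(a, b) ∉ R ∧ s(a, b) ∉ B ∧
      r.Ok (s(a, b) :: R) B n ∧ b'.Ok R (s(a, b) :: B) n

instance StratTree.decOk : (t : StratTree) → (R B : List (Sym2 (Fin 7))) → (n : ℕ) →
    Decidable (t.Ok R B n)
  | .red f, R, _, _ => by unfold StratTree.Ok; infer_instance
  | .blue f, _, B, _ => by unfold StratTree.Ok; infer_instance
  | .node _ _ _ _, _, _, 0 => by unfold StratTree.Ok; infer_instance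
  | .node a b r b', R, B, n + 1 => by
      have := StratTree.decOk r (s(a, b) :: R) B n
      have := StratTree.decOk b' R (s(a, b) :: B) n
      unfold StratTree.Ok; infer_instance

/-- Image in `ℕ` of a list of labelled edges. -/
def edgeImage (w : Fin 7 → ℕ) (L : List (Sym2 (Fin 7))) : Set (Sym2 ℕ) :=
  Sym2.map w '' {e | e ∈ L}

lemma edgeImage_cons (w : Fin 7 → ℕ) (e : Sym2 (Fin 7)) (L : List (Sym2 (Fin 7))) :
    edgeImage w (e :: L) = insert (Sym2.map w e) (edgeImage w L) := by
  unfold edgeImage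
  rw [← Set.image_insert_eq]
  congr 1
  ext x
  simp

lemma mem_edgeImage {w : Fin 7 → ℕ} (hw : Function.Injective w) (e : Sym2 (Fin 7))
    (L : List (Sym2 (Fin 7))) : Sym2.map w e ∈ edgeImage w L ↔ e ∈ L := by
  unfold edgeImage
  rw [(Sym2.map.injective hw).mem_set_image]
  rfl

lemma builderWinsIn_of_copy {V W : Type*} {G : SimpleGraph V} {H : SimpleGraph W}
    {R B : Set (Sym2 ℕ)} (h : HasCopy G R ∨ HasCopy H B) (n : ℕ) :
    BuilderWinsIn G H R B n := by
  cases n with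
  | zero => exact h
  | succ n =>
    rcases h with h | h
    · exact Or.inl h
    · exact Or.inr (Or.inl h)

lemma StratTree.Ok.wins {w : Fin 7 → ℕ} (hw : Function.Injective w) :
    ∀ (t : StratTree) (R B : List (Sym2 (Fin 7))) (n : ℕ), t.Ok R B n →
      BuilderWinsIn (cycleGraph 4) (pathGraph 6) (edgeImage w R) (edgeImage w B) n := by
  intro t
  induction t with
  | red f =>
    intro R B n h
    obtain ⟨hf, h⟩ := h
    refine builderWinsIn_of_copy (Or.inl ⟨w ∘ f, hw.comp hf, ?_⟩) n
    intro a b hab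
    rw [show s((w ∘ f) a, (w ∘ f) b) = Sym2.map w s(f a, f b) from rfl, mem_edgeImage hw]
    have hab' : b = a + 1 ∨ a = b + 1 := by
      revert a b; decide
    rcases hab' with rfl | rfl
    · exact h a
    · rw [Sym2.eq_swap]; exact h b
  | blue f =>
    intro R B n h
    obtain ⟨hf, h⟩ := h
    refine builderWinsIn_of_copy (Or.inr ⟨w ∘ f, hw.comp hf, ?_⟩) n
    intro a b hab
    rw [show s((w ∘ f) a, (w ∘ f) b) = Sym2.map w s(f a, f b) from rfl, mem_edgeImage hw]
    have key : ∀ a b : Fin 6, a.val + 1 = b.val →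
        ∃ i : Fin 5, a = i.castSucc ∧ b = i.succ := by decide
    rw [pathGraph_adj] at hab
    rcases hab with hab | hab
    · obtain ⟨i, rfl, rfl⟩ := key a b hab
      exact h i
    · obtain ⟨i, rfl, rfl⟩ := key b a hab
      rw [Sym2.eq_swap]; exact h i
  | node a b r b' ihr ihb =>
    intro R B n h
    cases n with
    | zero => exact h.elim
    | succ n =>
      obtain ⟨hab, hR, hB, hr, hb⟩ := h
      refine Or.inr (Or.inr ⟨Sym2.map w s(a, b), ?_, ?_, ?_, ?_, ?_⟩)
      · simpa using fun h => hab (hw h)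
      · rwa [mem_edgeImage hw]
      · rwa [mem_edgeImage hw]
      · rw [← edgeImage_cons]; exact ihr _ _ _ hr
      · rw [← edgeImage_cons]; exact ihb _ _ _ hb

/-- Builder's strategy in case `B8`; vertex `6` is a fresh vertex. -/
def stratB8 : StratTree :=
  (.node 0 2
    (.node 0 3
      (.node 1 3
        (.red ![0, 2, 1, 3])
        (.node 0 6
          (.node 1 6
            (.red ![0, 2, 1, 6])
            (.node 2 6
              (.red ![0, 3, 2, 6])
              (.blue ![2, 6, 1, 3, 4, 5])))
          (.blue ![5, 4, 3, 1, 0, 6])))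
      (.node 1 6
        (.node 0 6
          (.red ![0, 2, 1, 6])
          (.node 3 6
            (.red ![1, 2, 3, 6])
            (.blue ![1, 0, 6, 3, 4, 5])))
        (.blue ![5, 4, 3, 0, 1, 6])))
    (.node 1 3
      (.node 1 5
        (.node 2 5
          (.red ![1, 3, 2, 5])
          (.blue ![1, 0, 2, 5, 4, 3]))
        (.blue ![2, 0, 1, 5, 4, 3]))
      (.blue ![2, 0, 1, 3, 4, 5])))

lemma stratB8_ok : stratB8.Ok [s(1, 2), s(2, 3)] [s(0, 1), s(3, 4), s(4, 5)] 6 := by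
  decide +kernel

/-- Case `B8`: in the online Ramsey game with targets red `C₄` and blue `P₆`,
from the position in which the five edges `v₁v₂, v₂v₃, v₃v₄, v₄v₅, v₅v₆` of a path on
six distinct vertices have been colored blue, red, red, blue, blue respectively,
Builder can force a red copy of `C₄` or a blue copy of `P₆` within at most 6 additional
rounds (so within at most 11 rounds in total). -/
theorem builder_wins_case_B8 (v : Fin 6 → ℕ) (hv : Function.Injective v) :
    BuilderWinsIn (cycleGraph 4) (pathGraph 6)
      {s(v 1, v 2), s(v 2, v 3)}
      {s(v 0, v 1), s(v 3, v 4), s(v 4, v 5)} 6 := by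
  obtain ⟨x, hx⟩ := (Set.finite_range v).exists_notMem
  have hw : Function.Injective (Fin.snoc v x : Fin 7 → ℕ) :=
    Fin.snoc_injective_iff.2 ⟨hv, hx⟩
  have h := StratTree.Ok.wins hw _ _ _ _ stratB8_ok
  have e (i : Fin 6) : (Fin.snoc v x : Fin 7 → ℕ) i.castSucc = v i :=
    Fin.snoc_castSucc (α := fun _ => ℕ) ..
  have e0 := e 0
  have e1 := e 1
  have e2 := e 2
  have e3 := e 3
  have e4 := e 4
  have e5 := e 5
  simp only [Fin.reduceCastSucc] at e0 e1 e2 e3 e4 e5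
  have nil : edgeImage (Fin.snoc v x : Fin 7 → ℕ) [] = ∅ := by simp [edgeImage]
  simp only [edgeImage_cons, nil, Sym2.map_mk, e0, e1, e2, e3, e4, e5] at h
  simpa using h
end
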